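/- Let G be a group generated by a finite set S such that the word metric d_S on G is δ-hyperbolic. Then there exists a constant C > 0, depending only on δ and S, such that for every K ≥ 0, every K-quasiconvex subgroup Q ≤ G, and every subgroup G' ≤ G of finite index I, the intersection Q ∩ G' is C·I·(K+1)-quasiconvex in G with respect to S. -/

import Mathlib

/-- The word length of `g` with respect to a generating set `S`: the least `n` such that
`g` is a product of `n` elements of `S ∪ S⁻¹`. -/
noncomputable def wordLength {G : Type*} [Group G] (S : Set G) (g : G) : ℕ :=
  sInf {n : ℕ | ∃ w : List G, (∀ x ∈ w, x ∈ S ∨ x⁻¹ ∈ S) ∧ w.length = n ∧ w.prod = g}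

/-- A subgroup `Q` is `K`-quasiconvex with respect to `S` if for every `q ∈ Q` and every
minimal-length expression of `q` as a word in `S ∪ S⁻¹`, every prefix product of that word
lies at word-metric distance at most `K` from `Q`. -/
def IsQuasiconvex {G : Type*} [Group G] (S : Set G) (Q : Subgroup G) (K : ℕ) : Prop :=
  ∀ w : List G, (∀ x ∈ w, x ∈ S ∨ x⁻¹ ∈ S) → w.prod ∈ Q →
    w.length = wordLength S w.prod →
    ∀ j : ℕ, ∃ h ∈ Q, wordLength S ((w.take j).prod⁻¹ * h) ≤ K

/-!
A `K`-quasiconvex subgroup `Q` is generated by its elements of length at most `2 * K + 1`: join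
consecutive points of `Q` lying near the prefixes of a geodesic word. For `q ∈ Q`, write `q⁻¹` as a
product of such elements and let its suffixes act on the base point of `Q ⧸ (Q ⊓ H)`. Cutting out
the segment between two visits to the same coset does not change the coset reached at the end, so
fewer than `[Q : Q ⊓ H]` factors suffice. Their product `t` satisfies `q * t ∈ H`, so each point of
`Q` is within `([Q : Q ⊓ H] - 1) * (2 * K + 1)` of `Q ⊓ H`.
-/

section WordLength

variable {G : Type*} [Group G] {S : Set G}

lemma exists_word_length_eq_wordLength {g : G} (hg : g ∈ Subgroup.closure S) :
    ∃ w : List G, (∀ x ∈ w, x ∈ S ∨ x⁻¹ ∈ S) ∧ w.length = wordLength S g ∧ w.prod = g := by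
  rw [← Subgroup.mem_toSubmonoid, Subgroup.closure_toSubmonoid] at hg
  obtain ⟨w, hw, hprod⟩ := Submonoid.exists_list_of_mem_closure hg
  have hne : {n : ℕ | ∃ w : List G, (∀ x ∈ w, x ∈ S ∨ x⁻¹ ∈ S) ∧ w.length = n ∧
      w.prod = g}.Nonempty := ⟨w.length, w, hw, rfl, hprod⟩
  exact Nat.sInf_mem hne

lemma wordLength_prod_le_length {w : List G} (hw : ∀ x ∈ w, x ∈ S ∨ x⁻¹ ∈ S) :
    wordLength S w.prod ≤ w.length :=
  Nat.sInf_le ⟨w, hw, rfl, rfl⟩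

@[simp]
lemma wordLength_one : wordLength S (1 : G) = 0 :=
  Nat.le_zero.mp (wordLength_prod_le_length (w := []) (by simp))

@[simp]
lemma wordLength_inv (g : G) : wordLength S g⁻¹ = wordLength S g := by
  have word_inv {n : ℕ} {a : G} :
      (∃ w : List G, (∀ x ∈ w, x ∈ S ∨ x⁻¹ ∈ S) ∧ w.length = n ∧ w.prod = a) →
        ∃ w : List G, (∀ x ∈ w, x ∈ S ∨ x⁻¹ ∈ S) ∧ w.length = n ∧ w.prod = a⁻¹ := by
    rintro ⟨w, hw, rfl, rfl⟩
    refine ⟨(w.map (·⁻¹)).reverse, fun x hx ↦ ?_, by simp, (List.prod_inv_reverse w).symm⟩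
    obtain ⟨y, hy, rfl⟩ := List.mem_map.mp (List.mem_reverse.mp hx)
    simpa only [inv_inv] using (hw y hy).symm
  unfold wordLength
  congr 1
  ext n
  exact ⟨fun h ↦ inv_inv g ▸ word_inv h, word_inv⟩

lemma wordLength_mul_le (hS : Subgroup.closure S = ⊤) (a b : G) :
    wordLength S (a * b) ≤ wordLength S a + wordLength S b := by
  obtain ⟨u, hu, hu_length, rfl⟩ := exists_word_length_eq_wordLength (hS ▸ Subgroup.mem_top a)
  obtain ⟨v, hv, hv_length, rfl⟩ := exists_word_length_eq_wordLength (hS ▸ Subgroup.mem_top b)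
  rw [← hu_length, ← hv_length, ← List.prod_append, ← List.length_append]
  exact wordLength_prod_le_length fun x hx ↦ (List.mem_append.mp hx).elim (hu x) (hv x)

lemma wordLength_inv_mul_comm (a b : G) : wordLength S (a⁻¹ * b) = wordLength S (b⁻¹ * a) := by
  rw [← wordLength_inv, mul_inv_rev, inv_inv]

lemma wordLength_inv_mul_triangle (hS : Subgroup.closure S = ⊤) (a b c : G) :
    wordLength S (a⁻¹ * c) ≤ wordLength S (a⁻¹ * b) + wordLength S (b⁻¹ * c) := by
  simpa only [mul_assoc, mul_inv_cancel_left] using wordLength_mul_le hS (a⁻¹ * b) (b⁻¹ * c)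

lemma wordLength_list_prod_le (hS : Subgroup.closure S = ⊤) {L : ℕ} {l : List G}
    (hl : ∀ x ∈ l, wordLength S x ≤ L) : wordLength S l.prod ≤ l.length * L := by
  induction l with
  | nil => simp
  | cons x l ih =>
    rw [List.forall_mem_cons] at hl
    calc wordLength S (x :: l).prod
        ≤ wordLength S x + wordLength S l.prod := by
          simpa only [List.prod_cons] using wordLength_mul_le hS x l.prod
      _ ≤ L + l.length * L := add_le_add hl.1 (ih hl.2)
      _ = (x :: l).length * L := by rw [List.length_cons]; ring

lemma wordLength_take_inv_mul_take_succ_le_one {w : List G} (hw : ∀ x ∈ w, x ∈ S ∨ x⁻¹ ∈ S)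
    (j : ℕ) : wordLength S ((w.take j).prod⁻¹ * (w.take (j + 1)).prod) ≤ 1 := by
  rw [List.take_add_one, List.prod_append, inv_mul_cancel_left]
  refine (wordLength_prod_le_length fun x hx ↦ ?_).trans Option.length_toList_le
  exact hw x (List.mem_of_getElem? (Option.mem_toList.mp hx))

end WordLength

section Subwords

lemma exists_shorter_sublist_prod_smul_eq {M X : Type*} [Monoid M] [MulAction M X] [Finite X]
    (x : X) {l : List M} (hl : Nat.card X ≤ l.length) :
    ∃ v : List M, v.Sublist l ∧ v.prod • x = l.prod • x ∧ v.length < l.length := by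
  have : Fintype X := Fintype.ofFinite X
  obtain ⟨i, j, hij, hsuffix⟩ : ∃ i j : Fin (l.length + 1), i < j ∧
      (l.drop i).prod • x = (l.drop j).prod • x := by
    obtain ⟨i, j, hne, heq⟩ := Fintype.exists_ne_map_eq_of_card_lt
      (fun i : Fin (l.length + 1) ↦ (l.drop i).prod • x)
      (by rw [Fintype.card_fin, ← Nat.card_eq_fintype_card]; omega)
    rcases hne.lt_or_gt with hlt | hgt
    exacts [⟨i, j, hlt, heq⟩, ⟨j, i, hgt, heq.symm⟩]
  refine ⟨l.take i ++ l.drop j, ?_, ?_, ?_⟩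
  · conv_rhs => rw [← List.take_append_drop i l]
    exact (List.Sublist.refl _).append (List.drop_sublist_drop_left l hij.le)
  · rw [List.prod_append, mul_smul, ← hsuffix, ← mul_smul, List.prod_take_mul_prod_drop]
  · rw [List.length_append, List.length_take, List.length_drop]
    omega

lemma exists_sublist_prod_smul_eq_length_lt_card {M X : Type*} [Monoid M] [MulAction M X]
    [Finite X] (x : X) (l : List M) :
    ∃ v : List M, v.Sublist l ∧ v.prod • x = l.prod • x ∧ v.length < Nat.card X := by
  induction hn : l.length using Nat.strong_induction_on generalizing l with
  | _ n ih =>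
    subst hn
    rcases lt_or_ge l.length (Nat.card X) with hlt | hge
    · exact ⟨l, List.Sublist.refl l, rfl, hlt⟩
    · obtain ⟨u, hul, hu_smul, hu_length⟩ := exists_shorter_sublist_prod_smul_eq x hge
      obtain ⟨v, hvu, hv_smul, hv_length⟩ := ih u.length hu_length u rfl
      exact ⟨v, hvu.trans hul, hv_smul.trans hu_smul, hv_length⟩

lemma exists_sublist_prod_inv_mul_prod_mem {G : Type*} [Group G] (H : Subgroup G)
    {Q : Subgroup G} [H.IsFiniteRelIndex Q] {l : List G} (hl : ∀ x ∈ l, x ∈ Q) :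
    ∃ v : List G, v.Sublist l ∧ v.prod⁻¹ * l.prod ∈ H ∧ v.length < H.relIndex Q := by
  lift l to List Q using hl
  obtain ⟨v, hvl, hcoset, hv_length⟩ :=
    exists_sublist_prod_smul_eq_length_lt_card ((1 : Q) : Q ⧸ H.subgroupOf Q) l
  refine ⟨v.map Subtype.val, hvl.map _, ?_, by rwa [List.length_map]⟩
  rw [MulAction.Quotient.smul_coe, MulAction.Quotient.smul_coe, QuotientGroup.eq] at hcoset
  simpa [Subgroup.mem_subgroupOf] using hcoset

end Subwords

lemma relIndex_le_index {G : Type*} [Group G] (H K : Subgroup G) [H.FiniteIndex] :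
    H.relIndex K ≤ H.index := by
  rw [← H.relIndex_top_right]
  exact Subgroup.relIndex_le_of_le_right le_top
    (H.relIndex_top_right ▸ Subgroup.FiniteIndex.index_ne_zero)

namespace IsQuasiconvex

variable {G : Type*} [Group G] {S : Set G} {Q : Subgroup G} {K : ℕ}

lemma mono {K' : ℕ} (hQ : IsQuasiconvex S Q K) (hK : K ≤ K') : IsQuasiconvex S Q K' :=
  fun w hw hmem hgeodesic j ↦
    (hQ w hw hmem hgeodesic j).imp fun _ ⟨hh, hdist⟩ ↦ ⟨hh, hdist.trans hK⟩

lemma closure_wordLength_le_eq (hS : Subgroup.closure S = ⊤) (hQ : IsQuasiconvex S Q K) :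
    Submonoid.closure {t | t ∈ Q ∧ wordLength S t ≤ 2 * K + 1} = Q.toSubmonoid := by
  refine le_antisymm (Submonoid.closure_le.mpr fun t ht ↦ ht.1) fun q hq ↦ ?_
  obtain ⟨w, hw, hgeodesic, rfl⟩ := exists_word_length_eq_wordLength (hS ▸ Subgroup.mem_top q)
  have near_prefix_mem_closure (j : ℕ) : ∀ h ∈ Q, wordLength S ((w.take j).prod⁻¹ * h) ≤ K →
      h ∈ Submonoid.closure {t | t ∈ Q ∧ wordLength S t ≤ 2 * K + 1} := by
    induction j with
    | zero =>
      intro h hh hdist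
      simp only [List.take_zero, List.prod_nil, inv_one, one_mul] at hdist
      exact Submonoid.subset_closure ⟨hh, by omega⟩
    | succ j ih =>
      intro h hh hdist
      obtain ⟨h', hh', hdist'⟩ := hQ w hw hq hgeodesic j
      have hstep : wordLength S (h'⁻¹ * h) ≤ 2 * K + 1 := by
        have h_first := wordLength_inv_mul_triangle hS h' (w.take j).prod h
        have h_second :=
          wordLength_inv_mul_triangle hS (w.take j).prod (w.take (j + 1)).prod h
        have h_letter := wordLength_take_inv_mul_take_succ_le_one hw j
        rw [wordLength_inv_mul_comm] at hdist'
        omega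
      rw [← mul_inv_cancel_left h' h]
      exact mul_mem (ih h' hh' hdist')
        (Submonoid.subset_closure ⟨mul_mem (inv_mem hh') hh, hstep⟩)
  exact near_prefix_mem_closure w.length w.prod hq (by simp)

lemma exists_mul_mem_wordLength_le (hS : Subgroup.closure S = ⊤) (hQ : IsQuasiconvex S Q K)
    (H : Subgroup G) [H.IsFiniteRelIndex Q] {q : G} (hq : q ∈ Q) :
    ∃ t ∈ Q, q * t ∈ H ∧ wordLength S t ≤ (H.relIndex Q - 1) * (2 * K + 1) := by
  obtain ⟨l, hl, hprod⟩ : ∃ l : List G,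
      (∀ t ∈ l, t ∈ Q ∧ wordLength S t ≤ 2 * K + 1) ∧ l.prod = q⁻¹ :=
    Submonoid.exists_list_of_mem_closure (closure_wordLength_le_eq hS hQ ▸ Q.inv_mem hq)
  obtain ⟨v, hvl, hmem, hv_length⟩ :=
    exists_sublist_prod_inv_mul_prod_mem H fun t ht ↦ (hl t ht).1
  refine ⟨v.prod, list_prod_mem fun t ht ↦ (hl t (hvl.subset ht)).1, ?_, ?_⟩
  · simpa only [hprod, mul_inv_rev, inv_inv] using inv_mem hmem
  · calc wordLength S v.prod
        ≤ v.length * (2 * K + 1) :=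
          wordLength_list_prod_le hS fun t ht ↦ (hl t (hvl.subset ht)).2
      _ ≤ (H.relIndex Q - 1) * (2 * K + 1) :=
          Nat.mul_le_mul_right _ (Nat.le_sub_one_of_lt hv_length)

end IsQuasiconvex

theorem quasiconvexity_of_intersection_with_finite_index_general
    {G : Type*} [Group G] {S : Set G} (hS : Subgroup.closure S = ⊤)
    {K : ℕ} {Q : Subgroup G} (hQ : IsQuasiconvex S Q K)
    (H : Subgroup G) [H.IsFiniteRelIndex Q] :
    IsQuasiconvex S (Q ⊓ H) (K + (H.relIndex Q - 1) * (2 * K + 1)) := by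
  intro w hw hmem hgeodesic j
  obtain ⟨q, hq, hdist⟩ := hQ w hw (Subgroup.mem_inf.mp hmem).1 hgeodesic j
  obtain ⟨t, ht, hqt, ht_length⟩ := hQ.exists_mul_mem_wordLength_le hS H hq
  refine ⟨q * t, Subgroup.mem_inf.mpr ⟨mul_mem hq ht, hqt⟩, ?_⟩
  rw [← mul_assoc]
  exact (wordLength_mul_le hS _ t).trans (add_le_add hdist ht_length)

/-- If the word metric on `G` with respect to the finite generating set `S` is
`δ`-hyperbolic (four-point condition), then there is `C > 0`, depending only on `δ` and
`S`, such that for every `K ≥ 0`, every `K`-quasiconvex subgroup `Q ≤ G` and every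
subgroup `G' ≤ G` of finite index `I`, the intersection `Q ∩ G'` is
`C·I·(K+1)`-quasiconvex in `G`. -/
theorem quasiconvexity_of_intersection_with_finite_index
    {G : Type*} [Group G] (S : Set G) (hSfin : S.Finite)
    (hSgen : Subgroup.closure S = ⊤)
    (δ : ℝ) (hδ : 0 ≤ δ)
    (hhyp : ∀ x y z w : G,
      (wordLength S (x⁻¹ * y) : ℝ) + (wordLength S (z⁻¹ * w) : ℝ) ≤
        max ((wordLength S (x⁻¹ * z) : ℝ) + (wordLength S (y⁻¹ * w) : ℝ))
            ((wordLength S (x⁻¹ * w) : ℝ) + (wordLength S (y⁻¹ * z) : ℝ)) + 2 * δ) :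
    ∃ C : ℕ, 0 < C ∧
      ∀ (K : ℕ) (Q : Subgroup G), IsQuasiconvex S Q K →
        ∀ (G' : Subgroup G) (I : ℕ), G'.index = I → I ≠ 0 →
          IsQuasiconvex S (Q ⊓ G') (C * I * (K + 1)) := by
  refine ⟨2, two_pos, fun K Q hQ G' I hI hI0 ↦ ?_⟩
  have : G'.FiniteIndex := ⟨hI ▸ hI0⟩
  have : G'.IsFiniteRelIndex Q := Subgroup.isFiniteRelIndex_of_finiteIndex
  have hrel_le : G'.relIndex Q ≤ I := hI ▸ relIndex_le_index G' Q
  obtain ⟨n, rfl⟩ := Nat.exists_eq_add_one_of_ne_zero hI0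
  refine (quasiconvexity_of_intersection_with_finite_index_general hSgen hQ G').mono ?_
  calc K + (G'.relIndex Q - 1) * (2 * K + 1)
      ≤ K + n * (2 * K + 1) := by gcongr; omega
    _ ≤ 2 * (n + 1) * (K + 1) := by linarith
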